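/- Let R be a ring, q a central invertible element of R, and n ≥ 2. Let z = (z_{ij})_{1≤i,j≤n} be a quantum matrix over R such that z_{11} is invertible in R, and let ξ_1, …, ξ_n ∈ R satisfy ξ_i² = 0 for all i and ξ_i ξ_j = q^{-1} ξ_j ξ_i for all i < j, with every ξ_k commuting with every z_{ij}. Set ξ'_1 = Σ_j z_{1j} ξ_j and, for i ≥ 2, t_i = −z_{i1} z_{11}^{-1}. Then t_i ξ'_1 = q ξ'_1 t_i for every i ≥ 2. -/

import Mathlib

/-- The relations `Rel_q` of the ring of quantum matrices `M_q(n)` over a ring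
`R`, for a (central) invertible element `q`. -/
def IsQuantumMatrix {R : Type*} [Ring R] (q : Rˣ) {m n : ℕ}
    (z : Fin m → Fin n → R) : Prop :=
  (∀ (i : Fin m) (k l : Fin n), k < l → z i l * z i k = (q : R) * (z i k * z i l)) ∧
  (∀ (i j : Fin m) (k : Fin n), i < j → z j k * z i k = (q : R) * (z i k * z j k)) ∧
  (∀ (i j : Fin m) (k l : Fin n), i < j → k < l → z i l * z j k = z j k * z i l) ∧
  (∀ (i j : Fin m) (k l : Fin n), i < j → k < l →
    z j l * z i k - z i k * z j l = ((q⁻¹ : Rˣ) - (q : R)) * (z i l * z j k))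

/-- The number of inversions (the length) of a permutation. -/
def inversions {n : ℕ} (σ : Equiv.Perm (Fin n)) : ℕ :=
  (Finset.univ.filter (fun x : Fin n × Fin n => x.1 < x.2 ∧ σ x.2 < σ x.1)).card

/-- The quantum determinant
`det_q(z) = Σ_{σ} (-q⁻¹)^{ℓ(σ)} z_{1σ(1)} z_{2σ(2)} ⋯ z_{nσ(n)}`,
with the (noncommutative) product taken in increasing row order. -/
def qdet {R : Type*} [Ring R] (q : Rˣ) {n : ℕ}
    (z : Fin n → Fin n → R) : R :=
  ∑ σ : Equiv.Perm (Fin n),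
    ((-q⁻¹ : Rˣ) : R) ^ inversions σ * (List.ofFn fun i => z i (σ i)).prod

/-- If `z` is an `n × n` quantum matrix (`n ≥ 2`) with `z₁₁` invertible (with
two-sided inverse `w`) and `ξ₁, …, ξ_n` is a point of the quantum Grassmannian
plane commuting with all entries of `z`, then with `ξ'₁ = Σⱼ z₁ⱼ ξⱼ` and
`tᵢ = -zᵢ₁ z₁₁⁻¹` for `i ≥ 2` one has `tᵢ ξ'₁ = q ξ'₁ tᵢ`. -/
theorem t_xi_commutation {R : Type*} [Ring R] (q : Rˣ)
    (hqc : ∀ x : R, (q : R) * x = x * (q : R)) (n : ℕ)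
    (z : Fin (n + 2) → Fin (n + 2) → R) (hz : IsQuantumMatrix q z)
    (w : R) (hw : z 0 0 * w = 1) (hw' : w * z 0 0 = 1)
    (ξ : Fin (n + 2) → R)
    (hξsq : ∀ i, ξ i * ξ i = 0)
    (hξ : ∀ i j : Fin (n + 2), i < j → ξ i * ξ j = ((q⁻¹ : Rˣ) : R) * (ξ j * ξ i))
    (hcomm : ∀ (k i j : Fin (n + 2)), ξ k * z i j = z i j * ξ k) :
    ∀ i : Fin (n + 2), i ≠ 0 →
      (-(z i 0 * w)) * (∑ j, z 0 j * ξ j) =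
        (q : R) * ((∑ j, z 0 j * ξ j) * (-(z i 0 * w))) := by
  obtain ⟨h1, h2, h3, -⟩ := hz
  intro i hi
  have hi0 : 0 < i := Fin.pos_of_ne_zero hi
  have hwξ : ∀ k, ξ k * w = w * ξ k := fun k => by
    calc ξ k * w = (w * z 0 0) * (ξ k * w) := by rw [hw', one_mul]
      _ = w * (z 0 0 * ξ k) * w := by simp only [mul_assoc]
      _ = w * (ξ k * z 0 0) * w := by rw [hcomm]
      _ = w * ξ k * (z 0 0 * w) := by simp only [mul_assoc]
      _ = w * ξ k := by rw [hw, mul_one]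
  have key : ∀ j, z i 0 * w * z 0 j = (q : R) * (z 0 j * (z i 0 * w)) := by
    intro j
    by_cases hj : j = 0
    · subst hj
      calc z i 0 * w * z 0 0 = z i 0 * (w * z 0 0) := mul_assoc _ _ _
        _ = z i 0 * (z 0 0 * w) := by rw [hw', hw]
        _ = (z i 0 * z 0 0) * w := (mul_assoc _ _ _).symm
        _ = _ := by rw [h2 0 i 0 hi0]; simp only [mul_assoc]
    · have hj0 : 0 < j := Fin.pos_of_ne_zero hj
      have e : w * z 0 j = (q : R) * (z 0 j * w) := by
        calc w * z 0 j = w * z 0 j * (z 0 0 * w) := by rw [hw, mul_one]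
          _ = w * (z 0 j * z 0 0) * w := by simp only [mul_assoc]
          _ = (w * (q : R)) * (z 0 0 * (z 0 j * w)) := by
            rw [h1 0 0 j hj0]; simp only [mul_assoc]
          _ = (q : R) * ((w * z 0 0) * (z 0 j * w)) := by
            rw [← hqc]; simp only [mul_assoc]
          _ = _ := by rw [hw', one_mul]
      calc z i 0 * w * z 0 j = z i 0 * (w * z 0 j) := mul_assoc _ _ _
        _ = (z i 0 * (q : R)) * (z 0 j * w) := by rw [e, mul_assoc]
        _ = (q : R) * ((z i 0 * z 0 j) * w) := by rw [← hqc]; simp only [mul_assoc]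
        _ = _ := by rw [← h3 0 i 0 j hi0 hj0, mul_assoc]
  rw [neg_mul, mul_neg, mul_neg, Finset.mul_sum, Finset.sum_mul, Finset.mul_sum]
  congr 1
  refine Finset.sum_congr rfl fun j _ => ?_
  have hc : ξ j * (z i 0 * w) = z i 0 * w * ξ j := by
    rw [← mul_assoc, hcomm, mul_assoc, hwξ, mul_assoc]
  rw [mul_assoc (z 0 j), hc, ← mul_assoc, key]
  simp only [mul_assoc]
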